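/- Let N = 1. A map μ : C^1 → ℝ is an invariant, continuous and monotone increasing valuation on C^1 if and only if there exist non-atomic Radon measures ν_0 and ν_1 on [0,∞), with ν_1([0,δ]) = 0 for some δ > 0, such that μ(f) = ν_0([0, M(f)]) + ∫_{(0,∞)} vol_1(L_t(f)) dν_1(t) for every f ∈ C^1, where M(f) is the maximum of f on ℝ (with M(0) = 0) and vol_1 is the Lebesgue measure on ℝ. -/

import Mathlib

open Filter Topology MeasureTheory

noncomputable section

/-- A function `f : ℝ → ℝ` is quasi-concave if it is nonnegative and all its
superlevel sets `{x | t ≤ f x}` for `t > 0` are empty or compact and convex. -/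
def QuasiConcave1 (f : ℝ → ℝ) : Prop :=
  (∀ x, 0 ≤ f x) ∧
  ∀ t : ℝ, 0 < t →
    {x | t ≤ f x} = ∅ ∨ (IsCompact {x | t ≤ f x} ∧ Convex ℝ {x | t ≤ f x})

/-- `μ` is a valuation on `C^1`: it vanishes on the zero function and satisfies the
inclusion-exclusion property with respect to pointwise max and min. -/
def IsValuation1 (μ : (ℝ → ℝ) → ℝ) : Prop :=
  μ (fun _ => 0) = 0 ∧
  ∀ f g : ℝ → ℝ, QuasiConcave1 f → QuasiConcave1 g →
    QuasiConcave1 (fun x => max (f x) (g x)) →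
    μ (fun x => max (f x) (g x)) + μ (fun x => min (f x) (g x)) = μ f + μ g

/-- `μ` is invariant under rigid motions (isometries) of `ℝ`. -/
def IsInvariantVal1 (μ : (ℝ → ℝ) → ℝ) : Prop :=
  ∀ (T : ℝ ≃ᵢ ℝ) (f : ℝ → ℝ), QuasiConcave1 f → μ (fun x => f (T x)) = μ f

/-- `μ` is continuous: it preserves limits of monotone pointwise convergent sequences
of quasi-concave functions. -/
def IsContinuousVal1 (μ : (ℝ → ℝ) → ℝ) : Prop :=
  ∀ (fi : ℕ → ℝ → ℝ) (f : ℝ → ℝ),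
    (∀ i, QuasiConcave1 (fi i)) → QuasiConcave1 f →
    (Monotone fi ∨ Antitone fi) →
    (∀ x, Tendsto (fun i => fi i x) atTop (𝓝 (f x))) →
    Tendsto (fun i => μ (fi i)) atTop (𝓝 (μ f))

/-- `μ` is monotone increasing: `f ≤ g` pointwise implies `μ f ≤ μ g`. -/
def IsMonotoneVal1 (μ : (ℝ → ℝ) → ℝ) : Prop :=
  ∀ f g : ℝ → ℝ, QuasiConcave1 f → QuasiConcave1 g → (∀ x, f x ≤ g x) → μ f ≤ μ g

namespace QCval

/-! ### Basic facts on quasi-concave functions -/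

lemma qc_isClosed {f : ℝ → ℝ} (hf : QuasiConcave1 f) (t : ℝ) : IsClosed {x | t ≤ f x} := by
  rcases lt_or_ge 0 t with h | h
  · rcases hf.2 t h with h' | h'
    · rw [h']; exact isClosed_empty
    · exact h'.1.isClosed
  · have : {x | t ≤ f x} = Set.univ := by
      ext x; simpa using h.trans (hf.1 x)
    rw [this]; exact isClosed_univ

lemma qc_isCompact {f : ℝ → ℝ} (hf : QuasiConcave1 f) {t : ℝ} (h : 0 < t) :
    IsCompact {x | t ≤ f x} := by
  rcases hf.2 t h with h' | h'
  · rw [h']; exact isCompact_empty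
  · exact h'.1

lemma qc_convex {f : ℝ → ℝ} (hf : QuasiConcave1 f) {t : ℝ} (h : 0 < t) :
    Convex ℝ {x | t ≤ f x} := by
  rcases hf.2 t h with h' | h'
  · rw [h']; exact convex_empty
  · exact h'.2

lemma qc_mk {f : ℝ → ℝ} (h0 : ∀ x, 0 ≤ f x)
    (h : ∀ t, 0 < t → IsCompact {x | t ≤ f x} ∧ Convex ℝ {x | t ≤ f x}) : QuasiConcave1 f :=
  ⟨h0, fun t ht => Or.inr (h t ht)⟩

lemma qc_usc {f : ℝ → ℝ} (hf : QuasiConcave1 f) : UpperSemicontinuous f :=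
  upperSemicontinuous_iff_isClosed_preimage.2 (fun t => qc_isClosed hf t)

lemma qc_measurable {f : ℝ → ℝ} (hf : QuasiConcave1 f) : Measurable f :=
  (qc_usc hf).measurable

lemma qc_max {f : ℝ → ℝ} (hf : QuasiConcave1 f) : ∃ x0, ∀ x, f x ≤ f x0 := by
  by_cases h : ∃ x, 0 < f x
  · obtain ⟨x1, h1⟩ := h
    obtain ⟨a, ha, hmax⟩ := UpperSemicontinuousOn.exists_isMaxOn (f := f)
      (s := {x | f x1 ≤ f x}) ⟨x1, le_refl (f x1)⟩ (qc_isCompact hf h1)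
      ((qc_usc hf).upperSemicontinuousOn _)
    refine ⟨a, fun x => ?_⟩
    rcases le_total (f x1) (f x) with h2 | h2
    · exact hmax h2
    · exact h2.trans ha
  · push Not at h
    exact ⟨0, fun x => (h x).trans (hf.1 0)⟩

lemma sSup_range_eq {f : ℝ → ℝ} {x0 : ℝ} (h : ∀ x, f x ≤ f x0) : sSup (Set.range f) = f x0 :=
  IsGreatest.csSup_eq ⟨⟨x0, rfl⟩, by rintro _ ⟨x, rfl⟩; exact h x⟩

lemma qc_le_sSup {f : ℝ → ℝ} (hf : QuasiConcave1 f) (x : ℝ) : f x ≤ sSup (Set.range f) := by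
  obtain ⟨x0, h0⟩ := qc_max hf
  rw [sSup_range_eq h0]; exact h0 x

lemma qc_sSup_nonneg {f : ℝ → ℝ} (hf : QuasiConcave1 f) : 0 ≤ sSup (Set.range f) :=
  (hf.1 0).trans (qc_le_sSup hf 0)

lemma qc_min {f g : ℝ → ℝ} (hf : QuasiConcave1 f) (hg : QuasiConcave1 g) :
    QuasiConcave1 (fun x => min (f x) (g x)) := by
  refine qc_mk (fun x => le_min (hf.1 x) (hg.1 x)) (fun t ht => ?_)
  have : {x | t ≤ min (f x) (g x)} = {x | t ≤ f x} ∩ {x | t ≤ g x} := by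
    ext x; simp
  rw [this]
  exact ⟨(qc_isCompact hf ht).inter_right (qc_isClosed hg t), (qc_convex hf ht).inter (qc_convex hg ht)⟩

/-! ### The functional built from two increasing continuous functions -/

/-- The functional `f ↦ G(max f) + ∫ F(f)`. -/
def V (G F : ℝ → ℝ) (f : ℝ → ℝ) : ℝ :=
  G (sSup (Set.range f)) + (∫⁻ x, ENNReal.ofReal (F (f x))).toReal

lemma lint_ne_top {F : ℝ → ℝ} (hF : Monotone F) {δ : ℝ} (hδ : 0 < δ)
    (hF0 : ∀ s ≤ δ, F s = 0) {f : ℝ → ℝ} (hf : QuasiConcave1 f) :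
    ∫⁻ x, ENNReal.ofReal (F (f x)) ≠ ⊤ := by
  have hle : ∫⁻ x, ENNReal.ofReal (F (f x)) ≤
      ∫⁻ x, ({x | δ ≤ f x}).indicator (fun _ => ENNReal.ofReal (F (sSup (Set.range f)))) x := by
    apply lintegral_mono
    intro x
    by_cases hx : δ ≤ f x
    · rw [Set.indicator_of_mem (by exact hx)]
      exact ENNReal.ofReal_le_ofReal (hF (qc_le_sSup hf x))
    · simp [hF0 _ (not_le.1 hx).le]
  refine ne_top_of_le_ne_top ?_ hle
  rw [lintegral_indicator_const (qc_isClosed hf δ).measurableSet]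
  exact ENNReal.mul_ne_top ENNReal.ofReal_ne_top (qc_isCompact hf hδ).measure_lt_top.ne

lemma sSup_max {f g : ℝ → ℝ} (hf : QuasiConcave1 f) (hg : QuasiConcave1 g) :
    sSup (Set.range fun x => max (f x) (g x)) = max (sSup (Set.range f)) (sSup (Set.range g)) := by
  obtain ⟨a, ha⟩ := qc_max hf
  obtain ⟨b, hb⟩ := qc_max hg
  rw [sSup_range_eq ha, sSup_range_eq hb]
  apply IsGreatest.csSup_eq
  constructor
  · rcases le_total (f a) (g b) with h | h
    · exact ⟨b, by simp [h, (ha b).trans h]⟩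
    · exact ⟨a, by simp [h, (hb a).trans h]⟩
  · rintro _ ⟨x, rfl⟩
    exact max_le_max (ha x) (hb x)

lemma sSup_min {f g : ℝ → ℝ} (hf : QuasiConcave1 f) (hg : QuasiConcave1 g)
    (hm : QuasiConcave1 (fun x => max (f x) (g x))) :
    sSup (Set.range fun x => min (f x) (g x)) = min (sSup (Set.range f)) (sSup (Set.range g)) := by
  obtain ⟨a, ha⟩ := qc_max hf
  obtain ⟨b, hb⟩ := qc_max hg
  rw [sSup_range_eq ha, sSup_range_eq hb]
  apply le_antisymm
  · obtain ⟨c, hc⟩ := qc_max (qc_min hf hg)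
    rw [sSup_range_eq hc]
    exact min_le_min (ha c) (hb c)
  · rcases le_or_gt (min (f a) (g b)) 0 with h | h
    · exact h.trans (qc_sSup_nonneg (qc_min hf hg))
    · have hpre := (qc_convex hm h).isPreconnected
      rw [isPreconnected_closed_iff] at hpre
      obtain ⟨x, -, hx⟩ := hpre {x | min (f a) (g b) ≤ f x} {x | min (f a) (g b) ≤ g x}
        (qc_isClosed hf _) (qc_isClosed hg _)
        (by intro x hx; simpa [-le_sup_iff, le_max_iff] using hx)
        ⟨a, by simp, by simp⟩ ⟨b, by simp, by simp⟩
      exact (le_min hx.1 hx.2).trans (qc_le_sSup (qc_min hf hg) x)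

lemma tendsto_sSup {fi : ℕ → ℝ → ℝ} {f : ℝ → ℝ} (hfi : ∀ i, QuasiConcave1 (fi i))
    (hf : QuasiConcave1 f) (hmono : Monotone fi ∨ Antitone fi)
    (hlim : ∀ x, Tendsto (fun i => fi i x) atTop (𝓝 (f x))) :
    Tendsto (fun i => sSup (Set.range (fi i))) atTop (𝓝 (sSup (Set.range f))) := by
  obtain ⟨x0, h0⟩ := qc_max hf
  have hle : ∀ i, fi i x0 ≤ sSup (Set.range (fi i)) := fun i => qc_le_sSup (hfi i) x0
  rw [sSup_range_eq h0]
  rcases hmono with hmono | hanti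
  · refine tendsto_of_tendsto_of_tendsto_of_le_of_le (hlim x0) tendsto_const_nhds hle ?_
    intro i
    obtain ⟨c, hc⟩ := qc_max (hfi i)
    simp only
    rw [sSup_range_eq hc]
    exact (Monotone.ge_of_tendsto (fun i j h => hmono h c) (hlim c) i).trans (h0 c)
  · rw [tendsto_order]
    constructor
    · intro a ha
      filter_upwards [(tendsto_order.1 (hlim x0)).1 a ha] with i hi
      exact hi.trans_le (hle i)
    · intro t ht
      have ht0 : 0 < t := (hf.1 x0).trans_lt ht
      have hant : Antitone (fun i => sSup (Set.range (fi i))) := by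
        intro i j hij
        obtain ⟨c, hc⟩ := qc_max (hfi j)
        simp only
        rw [sSup_range_eq hc]
        exact (hanti hij c).trans (qc_le_sSup (hfi i) c)
      by_contra hcon
      have hall : ∀ i, t ≤ sSup (Set.range (fi i)) := by
        intro i
        by_contra hi
        apply hcon
        filter_upwards [eventually_ge_atTop i] with j hj
        exact (hant hj).trans_lt (not_le.1 hi)
      obtain ⟨x, hx⟩ := IsCompact.nonempty_iInter_of_sequence_nonempty_isCompact_isClosed
        (fun i => {x | t ≤ fi i x})
        (fun i x hx => le_trans (show t ≤ fi (i+1) x from hx) (hanti (Nat.le_succ i) x))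
        (fun i => by
          obtain ⟨c, hc⟩ := qc_max (hfi i)
          exact ⟨c, by have := hall i; rwa [sSup_range_eq hc] at this⟩)
        (qc_isCompact (hfi 0) ht0) (fun i => qc_isClosed (hfi i) t)
      rw [Set.mem_iInter] at hx
      have : t ≤ f x := ge_of_tendsto' (hlim x) hx
      linarith [h0 x]

lemma isometry_mp (T : ℝ ≃ᵢ ℝ) : MeasurePreserving T (volume : Measure ℝ) volume := by
  have := T.measurePreserving_hausdorffMeasure 1
  rwa [hausdorffMeasure_real] at this

theorem V_props {G F : ℝ → ℝ} (hG : Monotone G) (hGc : Continuous G) (hG0 : G 0 = 0)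
    (hF : Monotone F) (hFc : Continuous F) {δ : ℝ} (hδ : 0 < δ) (hF0 : ∀ s ≤ δ, F s = 0) :
    IsValuation1 (V G F) ∧ IsInvariantVal1 (V G F) ∧ IsContinuousVal1 (V G F) ∧
      IsMonotoneVal1 (V G F) := by
  have hfin : ∀ f, QuasiConcave1 f → ∫⁻ x, ENNReal.ofReal (F (f x)) ≠ ⊤ :=
    fun f hf => lint_ne_top hF hδ hF0 hf
  have hmeas : ∀ f, QuasiConcave1 f → Measurable (fun x => ENNReal.ofReal (F (f x))) :=
    fun f hf => ENNReal.measurable_ofReal.comp (hFc.measurable.comp (qc_measurable hf))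
  refine ⟨⟨?_, ?_⟩, ?_, ?_, ?_⟩
  · simp [V, hG0, hF0 0 hδ.le]
  · intro f g hf hg hm
    have hi := qc_min hf hg
    have e1 : (∫⁻ x, ENNReal.ofReal (F (max (f x) (g x)))) + ∫⁻ x, ENNReal.ofReal (F (min (f x) (g x)))
        = (∫⁻ x, ENNReal.ofReal (F (f x))) + ∫⁻ x, ENNReal.ofReal (F (g x)) := by
      rw [← lintegral_add_left (hmeas _ hm), ← lintegral_add_left (hmeas _ hf)]
      congr 1; ext x
      rcases le_total (f x) (g x) with h | h
      · simp [h, add_comm]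
      · simp [h]
    have e2 := congrArg ENNReal.toReal e1
    rw [ENNReal.toReal_add (hfin _ hm) (hfin _ hi), ENNReal.toReal_add (hfin _ hf) (hfin _ hg)] at e2
    have e3 : G (max (sSup (Set.range f)) (sSup (Set.range g))) +
        G (min (sSup (Set.range f)) (sSup (Set.range g))) =
        G (sSup (Set.range f)) + G (sSup (Set.range g)) := by
      rcases le_total (sSup (Set.range f)) (sSup (Set.range g)) with h | h
      · simp [h, add_comm]
      · simp [h]
    simp only [V]
    rw [sSup_max hf hg, sSup_min hf hg hm]
    linarith
  · intro T f hf
    simp only [V]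
    have : Set.range (fun x => f (T x)) = Set.range f := T.surjective.range_comp f
    rw [this, (isometry_mp T).lintegral_comp (hmeas f hf)]
  · intro fi f hfi hf hmono hlim
    simp only [V]
    refine Tendsto.add ((hGc.tendsto _).comp (tendsto_sSup hfi hf hmono hlim)) ?_
    refine (ENNReal.tendsto_toReal (hfin f hf)).comp ?_
    have hl : ∀ x, Tendsto (fun i => ENNReal.ofReal (F (fi i x))) atTop
        (𝓝 (ENNReal.ofReal (F (f x)))) := fun x =>
      ENNReal.tendsto_ofReal ((hFc.tendsto _).comp (hlim x))
    rcases hmono with hmono | hanti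
    · exact lintegral_tendsto_of_tendsto_of_monotone (fun n => (hmeas _ (hfi n)).aemeasurable)
        (ae_of_all _ fun x i j hij => ENNReal.ofReal_le_ofReal (hF (hmono hij x)))
        (ae_of_all _ hl)
    · exact lintegral_tendsto_of_tendsto_of_antitone (fun n => (hmeas _ (hfi n)).aemeasurable)
        (ae_of_all _ fun x i j hij => ENNReal.ofReal_le_ofReal (hF (hanti hij x)))
        (hfin _ (hfi 0)) (ae_of_all _ hl)
  · intro f g hf hg hfg
    refine add_le_add (hG ?_) (ENNReal.toReal_mono (hfin g hg)
      (lintegral_mono fun x => ENNReal.ofReal_le_ofReal (hF (hfg x))))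
    obtain ⟨c, hc⟩ := qc_max hf
    rw [sSup_range_eq hc]
    exact (hfg c).trans (qc_le_sSup hg c)

/-! ### Relation with measures -/

/-- The functional appearing in the theorem. -/
def R (ν₀ ν₁ : Measure ℝ) (f : ℝ → ℝ) : ℝ :=
  (ν₀ (Set.Icc 0 (sSup (Set.range f)))).toReal +
    (∫⁻ t in Set.Ioi (0:ℝ), volume {x | t ≤ f x} ∂ν₁).toReal

lemma layer {ν : Measure ℝ} [SFinite ν] {f : ℝ → ℝ} (hf : Measurable f) :
    ∫⁻ t in Set.Ioi (0:ℝ), volume {x | t ≤ f x} ∂ν = ∫⁻ x, ν (Set.Ioc 0 (f x)) := by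
  have hS : MeasurableSet {p : ℝ × ℝ | p.1 ≤ f p.2} :=
    measurableSet_le measurable_fst (hf.comp measurable_snd)
  have h1 := Measure.prod_apply (μ := ν.restrict (Set.Ioi 0)) (ν := (volume : Measure ℝ)) hS
  have h2 := Measure.prod_apply_symm (μ := ν.restrict (Set.Ioi 0)) (ν := (volume : Measure ℝ)) hS
  rw [h1] at h2
  refine h2.trans ?_
  congr 1; ext x
  have : (fun y => (y, x)) ⁻¹' {p : ℝ × ℝ | p.1 ≤ f p.2} = Set.Iic (f x) := by
    ext y; simp
  rw [this, Measure.restrict_apply measurableSet_Iic, Set.inter_comm, Set.Ioi_inter_Iic]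

lemma R_eq_V {ν₀ ν₁ : Measure ℝ} [SFinite ν₁] {G F : ℝ → ℝ}
    (h0 : ∀ t, ν₀ {t} = 0) (hGn : ∀ s, 0 ≤ G s)
    (hG : ∀ s, 0 ≤ s → ν₀ (Set.Ioc 0 s) = ENNReal.ofReal (G s))
    (hF : ∀ s, 0 ≤ s → ν₁ (Set.Ioc 0 s) = ENNReal.ofReal (F s))
    {f : ℝ → ℝ} (hf : QuasiConcave1 f) : R ν₀ ν₁ f = V G F f := by
  unfold R V
  rw [layer (qc_measurable hf)]
  have hM := qc_sSup_nonneg hf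
  congr 1
  · rw [← Set.Ioc_insert_left hM]
    have : ν₀ (insert 0 (Set.Ioc 0 (sSup (Set.range f)))) = ν₀ (Set.Ioc 0 (sSup (Set.range f))) := by
      apply le_antisymm
      · refine (measure_union_le {0} _).trans ?_
        rw [h0, zero_add]
      · exact measure_mono (Set.subset_insert _ _)
    rw [this, hG _ hM, ENNReal.toReal_ofReal (hGn _)]
  · congr 2; ext x; exact hF _ (hf.1 x)

/-- The distribution function of a non-atomic Radon measure. -/
lemma cdf_exists {ν : Measure ℝ} (hK : ∀ K : Set ℝ, IsCompact K → ν K ≠ ⊤)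
    (h0 : ∀ t, ν {t} = 0) :
    ∃ G : ℝ → ℝ, Monotone G ∧ Continuous G ∧ (∀ s ≤ 0, G s = 0) ∧ (∀ s, 0 ≤ G s) ∧
      ∀ s, ν (Set.Ioc 0 s) = ENNReal.ofReal (G s) := by
  have : IsLocallyFiniteMeasure ν := ⟨fun x => ⟨Set.Icc (x-1) (x+1),
    Icc_mem_nhds (by linarith) (by linarith), (hK _ isCompact_Icc).lt_top⟩⟩
  have : NullSingletonClass ν := ⟨h0⟩
  have hfin : ∀ s, ν (Set.Ioc 0 s) ≠ ⊤ := fun s =>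
    ne_top_of_le_ne_top (hK _ isCompact_Icc) (measure_mono Set.Ioc_subset_Icc_self)
  refine ⟨fun s => (ν (Set.Ioc 0 s)).toReal, ?_, ?_, ?_, fun s => ENNReal.toReal_nonneg, ?_⟩
  · intro s t hst
    exact ENNReal.toReal_mono (hfin t) (measure_mono (Set.Ioc_subset_Ioc_right hst))
  · have hc := (intervalIntegral.continuous_primitive (μ := ν) (f := fun _ => (1:ℝ))
      (fun a b => intervalIntegrable_const) 0).comp (continuous_id.max (continuous_const (y := (0:ℝ))))
    convert hc using 2 with s
    simp only [Function.comp]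
    rw [intervalIntegral.integral_of_le (le_max_right _ _)]
    rcases le_total s 0 with h | h
    · simp [h]
    · simp [h, Measure.real]
  · intro s hs; simp [hs]
  · intro s; rw [ENNReal.ofReal_toReal (hfin s)]

end QCval

namespace QCval

/-! ### Multiples of characteristic functions of intervals -/

/-- `t` times the characteristic function of `[a,b]`. -/
def ind (t a b : ℝ) : ℝ → ℝ := fun x => if a ≤ x ∧ x ≤ b then t else 0

lemma qc_step {t : ℝ} (ht : 0 ≤ t) {p : ℝ → Prop} [DecidablePred p]
    (h : IsCompact {x | p x} ∧ Convex ℝ {x | p x}) :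
    QuasiConcave1 (fun x => if p x then t else 0) := by
  refine qc_mk (fun x => by split_ifs <;> simp [ht]) (fun s hs => ?_)
  rcases le_or_gt s t with hst | hst
  · have : {x | s ≤ if p x then t else 0} = {x | p x} := by
      ext x; simp only [Set.mem_ofPred_eq]; split_ifs with h1
      · simp [hst, h1]
      · simp [h1, hs]
    rw [this]; exact h
  · have : {x | s ≤ if p x then t else 0} = ∅ := by
      ext x; simp only [Set.mem_ofPred_eq]; split_ifs with h1
      · simp [hst]
      · simp [hs]
    rw [this]; exact ⟨isCompact_empty, convex_empty⟩

lemma qc_ind {t : ℝ} (ht : 0 ≤ t) (a b : ℝ) : QuasiConcave1 (ind t a b) :=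
  qc_step ht (p := fun x => a ≤ x ∧ x ≤ b) ⟨isCompact_Icc, convex_Icc a b⟩

lemma sSup_ind {t : ℝ} (ht : 0 ≤ t) {a b : ℝ} (hab : a ≤ b) : sSup (Set.range (ind t a b)) = t := by
  have : sSup (Set.range (ind t a b)) = ind t a b a := by
    apply sSup_range_eq
    intro x; simp only [ind, le_refl, hab, and_self, if_true]; split_ifs <;> simp [ht]
  rw [this]; simp [ind, hab]

lemma V_ind {G F : ℝ → ℝ} (hF0 : F 0 = 0) (hFn : ∀ s, 0 ≤ F s) {t : ℝ} (ht : 0 ≤ t) {a b : ℝ} (hab : a ≤ b) :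
    V G F (ind t a b) = G t + F t * (b - a) := by
  unfold V
  rw [sSup_ind ht hab]
  have : (fun x => ENNReal.ofReal (F (ind t a b x))) =
      (Set.Icc a b).indicator (fun _ => ENNReal.ofReal (F t)) := by
    ext x
    by_cases h : a ≤ x ∧ x ≤ b
    · rw [Set.indicator_of_mem (by exact h)]; simp [ind, h]
    · rw [Set.indicator_of_notMem (by exact h)]; simp [ind, h, hF0]
  rw [this, lintegral_indicator_const measurableSet_Icc, Real.volume_Icc, ENNReal.toReal_mul,
    ENNReal.toReal_ofReal (hFn t), ENNReal.toReal_ofReal (by linarith)]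

/-! ### Vanishing of valuations that vanish on characteristic functions -/

lemma D_step {D : (ℝ → ℝ) → ℝ} (h00 : D (fun _ => 0) = 0)
    (hD : ∀ t a b, 0 ≤ t → a ≤ b → D (ind t a b) = 0)
    {t : ℝ} (ht : 0 ≤ t) {p : ℝ → Prop} [DecidablePred p]
    (h : IsCompact {x | p x} ∧ Convex ℝ {x | p x}) :
    D (fun x => if p x then t else 0) = 0 := by
  rcases Set.eq_empty_or_nonempty {x | p x} with he | hne
  · have : (fun x => if p x then t else 0) = fun _ => (0:ℝ) := by
      ext x
      have : ¬ p x := fun hx => by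
        have : x ∈ {x | p x} := hx
        rw [he] at this; exact this
      simp [this]
    rw [this, h00]
  · have hI := eq_Icc_of_connected_compact ⟨hne, h.2.isPreconnected⟩ h.1
    have : (fun x => if p x then t else 0) = ind t (sInf {x | p x}) (sSup {x | p x}) := by
      ext x
      have hx : p x ↔ (sInf {x | p x} ≤ x ∧ x ≤ sSup {x | p x}) := by
        have : x ∈ {x | p x} ↔ x ∈ Set.Icc (sInf {x | p x}) (sSup {x | p x}) := by rw [← hI]
        exact this
      unfold ind
      by_cases hp : p x
      · rw [if_pos hp, if_pos (hx.1 hp)]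
      · rw [if_neg hp, if_neg (fun h => hp (hx.2 h))]
    rw [this]
    apply hD _ _ _ ht
    rw [hI] at hne
    exact Set.nonempty_Icc.1 hne

lemma D_simple {D : (ℝ → ℝ) → ℝ} (hval : IsValuation1 D)
    (hD : ∀ t a b, 0 ≤ t → a ≤ b → D (ind t a b) = 0) {h : ℝ} (hh : 0 < h) (n : ℕ) :
    ∀ m : ℝ → ℕ, QuasiConcave1 (fun x => h * m x) → (∀ x, m x ≤ n) →
      D (fun x => h * m x) = 0 := by
  induction n with
  | zero =>
    intro m _ hm
    have : (fun x => h * (m x : ℝ)) = fun _ => 0 := by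
      ext x; simp [Nat.le_zero.1 (hm x)]
    rw [this, hval.1]
  | succ n ih =>
    intro m hq hm
    have hset : {x | n + 1 ≤ m x} = {x | h * ((n + 1 : ℕ) : ℝ) ≤ h * m x} := by
      ext x; simp only [Set.mem_ofPred_eq]
      rw [mul_le_mul_iff_right₀ hh, Nat.cast_le]
    have hpos : 0 < h * ((n + 1 : ℕ) : ℝ) := by positivity
    have hpos' : 0 ≤ h * (n : ℝ) := by positivity
    have hK : IsCompact {x | n + 1 ≤ m x} ∧ Convex ℝ {x | n + 1 ≤ m x} := by
      rw [hset]; exact ⟨qc_isCompact hq hpos, qc_convex hq hpos⟩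
    have hgq : QuasiConcave1 (fun x => h * (min (m x) n : ℕ)) := by
      refine qc_mk (fun x => by positivity) (fun s hs => ?_)
      rcases le_or_gt s (h * n) with hsn | hsn
      · have : {x | s ≤ h * (min (m x) n : ℕ)} = {x | s ≤ h * m x} := by
          ext x; simp only [Set.mem_ofPred_eq]
          rcases le_total (m x) n with h1 | h1
          · simp [h1]
          · have : h * (n:ℝ) ≤ h * m x := by gcongr
            simp only [min_eq_right h1]
            exact ⟨fun _ => hsn.trans this, fun _ => hsn⟩
        rw [this]; exact ⟨qc_isCompact hq hs, qc_convex hq hs⟩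
      · have : {x | s ≤ h * (min (m x) n : ℕ)} = ∅ := by
          ext x; simp only [Set.mem_ofPred_eq, Set.mem_empty_iff_false, iff_false, not_le]
          refine lt_of_le_of_lt ?_ hsn
          gcongr; exact min_le_right _ _
        rw [this]; exact ⟨isCompact_empty, convex_empty⟩
    have hkq := qc_step hpos.le hK
    have emax : (fun x => max (h * ((min (m x) n : ℕ) : ℝ))
        (if n + 1 ≤ m x then h * ((n + 1 : ℕ) : ℝ) else 0)) = fun x => h * (m x : ℝ) := by
      ext x
      by_cases hx : n + 1 ≤ m x
      · have hx' : m x = n + 1 := le_antisymm (hm x) hx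
        rw [if_pos hx, hx', max_eq_right]
        gcongr; simp
      · rw [if_neg hx, min_eq_left (by omega), max_eq_left (by positivity)]
    have emin : (fun x => min (h * ((min (m x) n : ℕ) : ℝ))
        (if n + 1 ≤ m x then h * ((n + 1 : ℕ) : ℝ) else 0)) =
        fun x => if n + 1 ≤ m x then h * (n : ℝ) else 0 := by
      ext x
      by_cases hx : n + 1 ≤ m x
      · rw [if_pos hx, if_pos hx, min_eq_right (by omega : n ≤ m x), min_eq_left]
        gcongr; simp
      · rw [if_neg hx, if_neg hx, min_eq_right (by positivity)]
    have key := hval.2 _ _ hgq hkq (by rw [emax]; exact hq)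
    rw [emax, emin, ih _ hgq (fun x => min_le_right _ _),
      D_step hval.1 hD hpos.le hK, D_step hval.1 hD hpos' hK] at key
    linarith

lemma D_zero {D : (ℝ → ℝ) → ℝ} (hval : IsValuation1 D) (hcont : IsContinuousVal1 D)
    (hD : ∀ t a b, 0 ≤ t → a ≤ b → D (ind t a b) = 0) {f : ℝ → ℝ} (hf : QuasiConcave1 f) :
    D f = 0 := by
  let m : ℕ → ℝ → ℕ := fun i x => ⌊2 ^ i * f x⌋₊
  let fi : ℕ → ℝ → ℝ := fun i x => (1 / 2 ^ i) * (m i x : ℝ)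
  have hq : ∀ i, QuasiConcave1 (fi i) := by
    intro i
    refine qc_mk (fun x => by positivity) (fun s hs => ?_)
    have hc : 0 < ⌈2 ^ i * s⌉₊ := Nat.ceil_pos.2 (by positivity)
    have : {x | s ≤ fi i x} = {x | (⌈2 ^ i * s⌉₊ : ℝ) / 2 ^ i ≤ f x} := by
      ext x
      simp only [Set.mem_ofPred_eq, fi, m]
      rw [div_le_iff₀ (by positivity), mul_comm (f x), ← Nat.le_floor_iff (by have := hf.1 x; positivity),
        Nat.ceil_le, one_div, ← div_eq_inv_mul, le_div_iff₀ (by positivity), mul_comm]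
    rw [this]
    have hp : 0 < (⌈2 ^ i * s⌉₊ : ℝ) / 2 ^ i := by positivity
    exact ⟨qc_isCompact hf hp, qc_convex hf hp⟩
  have hmono : Monotone fi := by
    refine monotone_nat_of_le_succ (fun i x => ?_)
    simp only [fi, m]
    have h1 : 2 * ⌊2 ^ i * f x⌋₊ ≤ ⌊2 ^ (i+1) * f x⌋₊ := by
      apply Nat.le_floor
      push_cast
      have := Nat.floor_le (show 0 ≤ 2 ^ i * f x by have := hf.1 x; positivity)
      rw [pow_succ]; linarith
    have h2 : (2 * ⌊2 ^ i * f x⌋₊ : ℝ) ≤ ⌊2 ^ (i+1) * f x⌋₊ := by exact_mod_cast h1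
    rw [one_div_mul_eq_div, one_div_mul_eq_div, div_le_div_iff₀ (by positivity) (by positivity), pow_succ 2 i]
    rw [pow_succ 2 i] at h2
    have : (0:ℝ) < 2 ^ i := by positivity
    nlinarith
  have hlim : ∀ x, Tendsto (fun i => fi i x) atTop (𝓝 (f x)) := by
    intro x
    have h0 : Tendsto (fun i : ℕ => f x - (1/2 : ℝ) ^ i) atTop (𝓝 (f x - 0)) :=
      tendsto_const_nhds.sub (tendsto_pow_atTop_nhds_zero_of_lt_one (by norm_num) (by norm_num))
    rw [sub_zero] at h0
    refine tendsto_of_tendsto_of_tendsto_of_le_of_le h0 tendsto_const_nhds ?_ ?_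
    · intro i
      simp only [fi, m]
      have := Nat.lt_floor_add_one (2 ^ i * f x)
      rw [one_div_mul_eq_div, le_div_iff₀ (by positivity), sub_mul, one_div_pow,
        one_div_mul_cancel (by positivity)]
      linarith
    · intro i
      simp only [fi, m]
      have := Nat.floor_le (show 0 ≤ 2 ^ i * f x by have := hf.1 x; positivity)
      rw [one_div_mul_eq_div, div_le_iff₀ (by positivity)]
      linarith
  have hz : ∀ i, D (fi i) = 0 := fun i =>
    D_simple hval hD (by positivity) ⌊2 ^ i * sSup (Set.range f)⌋₊ (m i) (hq i)
      (fun x => Nat.floor_mono (by gcongr; exact qc_le_sSup hf x))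
  have := hcont fi f hq hf (Or.inl hmono) hlim
  simp only [hz] at this
  exact tendsto_nhds_unique this tendsto_const_nhds

/-! ### Extracting the two functions from a valuation -/

lemma ind_shift {μ : (ℝ → ℝ) → ℝ} (hinv : IsInvariantVal1 μ) {t : ℝ} (ht : 0 ≤ t) (a b : ℝ) :
    μ (ind t a b) = μ (ind t 0 (b - a)) := by
  rw [← hinv (IsometryEquiv.addRight (-a)) _ (qc_ind ht 0 (b - a))]
  congr 1; ext x
  simp only [ind, IsometryEquiv.addRight_apply]
  congr 1
  apply propext
  constructor <;> rintro ⟨h1, h2⟩ <;> constructor <;> linarith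

lemma additive_linear {ψ : ℝ → ℝ} (hadd : ∀ a b, 0 ≤ a → 0 ≤ b → ψ (a + b) = ψ a + ψ b)
    (hmono : ∀ a b, 0 ≤ a → a ≤ b → ψ a ≤ ψ b) {x : ℝ} (hx : 0 ≤ x) : ψ x = ψ 1 * x := by
  have h0 : ψ 0 = 0 := by have := hadd 0 0 le_rfl le_rfl; rw [add_zero] at this; linarith
  have hn : ∀ (n : ℕ) (y : ℝ), 0 ≤ y → ψ (n * y) = n * ψ y := by
    intro n y hy
    induction n with
    | zero => simp [h0]
    | succ n ih =>
      push_cast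
      rw [add_mul, one_mul, hadd _ _ (by positivity) hy, ih]; ring
  have h1 : 0 ≤ ψ 1 := by rw [← h0]; exact hmono 0 1 le_rfl zero_le_one
  have hb : ∀ n : ℕ, n * |ψ x - ψ 1 * x| ≤ ψ 1 := by
    intro n
    have hnx : 0 ≤ n * x := by positivity
    have a1 := Nat.floor_le hnx
    have a2 := (Nat.lt_floor_add_one (n * x)).le
    have b1 := hmono _ _ (by positivity) a1
    have b2 := hmono _ _ hnx a2
    have c1 := hn ⌊n * x⌋₊ 1 zero_le_one
    have c2 := hn (⌊n * x⌋₊ + 1) 1 zero_le_one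
    push_cast at c2
    rw [mul_one] at c1 c2
    rw [c1, hn n x hx] at b1
    rw [c2, hn n x hx] at b2
    have d : (n:ℝ) * |ψ x - ψ 1 * x| = |n * ψ x - ψ 1 * (n * x)| := by
      rw [← abs_of_nonneg (Nat.cast_nonneg n : (0:ℝ) ≤ n), ← abs_mul, abs_of_nonneg (Nat.cast_nonneg n : (0:ℝ) ≤ n)]
      congr 1; ring
    rw [d, abs_le]
    constructor <;> nlinarith
  by_contra hne
  have hp : 0 < |ψ x - ψ 1 * x| := abs_pos.2 (sub_ne_zero.2 hne)
  obtain ⟨n, hn'⟩ := exists_nat_gt (ψ 1 / |ψ x - ψ 1 * x|)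
  rw [div_lt_iff₀ hp] at hn'
  linarith [hb n]

lemma mono_cont {g : ℝ → ℝ} (hg : Monotone g)
    (h1 : ∀ t, Tendsto (fun n : ℕ => g (t - 1 / ((n:ℝ) + 1))) atTop (𝓝 (g t)))
    (h2 : ∀ t, Tendsto (fun n : ℕ => g (t + 1 / ((n:ℝ) + 1))) atTop (𝓝 (g t))) :
    Continuous g := by
  rw [continuous_iff_continuousAt]
  intro t
  rw [hg.continuousAt_iff_leftLim_eq_rightLim]
  have l0 : Tendsto (fun n : ℕ => t - 1 / ((n:ℝ) + 1)) atTop (𝓝[<] t) := by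
    rw [tendsto_nhdsWithin_iff]
    constructor
    · simpa using (tendsto_const_nhds (x := t)).sub (tendsto_one_div_add_atTop_nhds_zero_nat (𝕜 := ℝ))
    · refine Eventually.of_forall (fun n => ?_)
      have : 0 < 1 / ((n:ℝ) + 1) := by positivity
      simpa using this
  have r0 : Tendsto (fun n : ℕ => t + 1 / ((n:ℝ) + 1)) atTop (𝓝[>] t) := by
    rw [tendsto_nhdsWithin_iff]
    constructor
    · simpa using (tendsto_const_nhds (x := t)).add (tendsto_one_div_add_atTop_nhds_zero_nat (𝕜 := ℝ))
    · refine Eventually.of_forall (fun n => ?_)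
      have : 0 < 1 / ((n:ℝ) + 1) := by positivity
      simpa using this
  rw [tendsto_nhds_unique ((hg.tendsto_leftLim t).comp l0) (h1 t),
    tendsto_nhds_unique ((hg.tendsto_rightLim t).comp r0) (h2 t)]

lemma ind_mono {s t : ℝ} (h : s ≤ t) (a b x : ℝ) : ind s a b x ≤ ind t a b x := by
  unfold ind; split_ifs <;> simp [h]

lemma H_mono {μ : (ℝ → ℝ) → ℝ} (hmon : IsMonotoneVal1 μ) (l : ℝ) :
    Monotone (fun t => μ (ind (max t 0) 0 l)) := fun s t hst =>
  hmon _ _ (qc_ind (le_max_right _ _) _ _) (qc_ind (le_max_right _ _) _ _)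
    (ind_mono (max_le_max hst le_rfl) 0 l)

lemma H_cont {μ : (ℝ → ℝ) → ℝ} (hmon : IsMonotoneVal1 μ) (hcont : IsContinuousVal1 μ) (l : ℝ) :
    Continuous (fun t => μ (ind (max t 0) 0 l)) := by
  have hlim : ∀ (u : ℕ → ℝ) (t : ℝ), Tendsto u atTop (𝓝 t) → (Monotone u ∨ Antitone u) →
      Tendsto (fun n => μ (ind (max (u n) 0) 0 l)) atTop (𝓝 (μ (ind (max t 0) 0 l))) := by
    intro u t hu hm
    refine hcont (fun n => ind (max (u n) 0) 0 l) _ (fun n => qc_ind (le_max_right _ _) _ _)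
      (qc_ind (le_max_right _ _) _ _) ?_ ?_
    · rcases hm with hm | hm
      · exact Or.inl fun i j hij => fun x => ind_mono (max_le_max (hm hij) le_rfl) 0 l x
      · exact Or.inr fun i j hij => fun x => ind_mono (max_le_max (hm hij) le_rfl) 0 l x
    · intro x
      by_cases hx : 0 ≤ x ∧ x ≤ l
      · simpa [ind, hx] using hu.max (tendsto_const_nhds (x := (0:ℝ)))
      · simp [ind, hx]
  have hanti : Antitone (fun n : ℕ => 1 / ((n:ℝ) + 1)) := by
    intro i j hij
    have : (i:ℝ) ≤ j := by exact_mod_cast hij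
    simp only
    gcongr
  refine mono_cont (H_mono hmon l) (fun t => hlim _ t ?_ (Or.inl ?_)) (fun t => hlim _ t ?_ (Or.inr ?_))
  · simpa using (tendsto_const_nhds (x := t)).sub (tendsto_one_div_add_atTop_nhds_zero_nat (𝕜 := ℝ))
  · intro i j hij; have := hanti hij; simp only at this ⊢; linarith
  · simpa using (tendsto_const_nhds (x := t)).add (tendsto_one_div_add_atTop_nhds_zero_nat (𝕜 := ℝ))
  · intro i j hij; have := hanti hij; simp only at this ⊢; linarith

lemma ind_formula {μ : (ℝ → ℝ) → ℝ} (hval : IsValuation1 μ) (hinv : IsInvariantVal1 μ)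
    (hmon : IsMonotoneVal1 μ) {t : ℝ} (ht : 0 ≤ t) {l : ℝ} (hl : 0 ≤ l) :
    μ (ind t 0 l) = μ (ind t 0 0) + (μ (ind t 0 1) - μ (ind t 0 0)) * l := by
  have := additive_linear (ψ := fun l => μ (ind t 0 l) - μ (ind t 0 0)) ?_ ?_ hl
  · linarith
  · intro a b ha hb
    have emax : (fun x => max (ind t 0 a x) (ind t a (a+b) x)) = ind t 0 (a+b) := by
      ext x; simp only [ind]
      by_cases h1 : 0 ≤ x <;> by_cases h2 : x ≤ a <;> by_cases h3 : a ≤ x <;>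
        by_cases h4 : x ≤ a + b <;> simp [h1, h2, h3, h4, ht] <;> intros <;> linarith
    have emin : (fun x => min (ind t 0 a x) (ind t a (a+b) x)) = ind t a a := by
      ext x; simp only [ind]
      by_cases h1 : 0 ≤ x <;> by_cases h2 : x ≤ a <;> by_cases h3 : a ≤ x <;>
        by_cases h4 : x ≤ a + b <;> simp [h1, h2, h3, h4, ht] <;> intros <;> linarith
    have key := hval.2 _ _ (qc_ind ht 0 a) (qc_ind ht a (a+b)) (by rw [emax]; exact qc_ind ht _ _)
    rw [emax, emin, ind_shift hinv ht a a, ind_shift hinv ht a (a+b)] at key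
    simp only [sub_self, add_sub_cancel_left] at key
    linarith
  · intro a b ha hab
    have := hmon _ _ (qc_ind ht 0 a) (qc_ind ht 0 b) (fun x => by
      unfold ind; split_ifs with h1 h2 h2
      · exact le_rfl
      · exact absurd ⟨h1.1, h1.2.trans hab⟩ h2
      · exact ht
      · exact le_rfl)
    linarith

/-- A very slowly decreasing quasi-concave function. -/
lemma exists_slow (c : ℕ → ℝ) : ∃ f : ℝ → ℝ, QuasiConcave1 f ∧
    ∀ k : ℕ, ∃ l, c k ≤ l ∧ 0 ≤ l ∧ ∀ x, ind (1 / ((k:ℝ) + 1)) 0 l x ≤ f x := by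
  classical
  let L : ℕ → ℝ := fun k => ∑ j ∈ Finset.range (k+1), (|c j| + 1)
  have hLm : Monotone L := monotone_nat_of_le_succ (fun k => by
    simp only [L]; rw [Finset.sum_range_succ _ (k+1)]
    have := abs_nonneg (c (k+1)); linarith)
  have hLc : ∀ k, c k ≤ L k := by
    intro k
    simp only [L]; rw [Finset.sum_range_succ]
    have h1 : 0 ≤ ∑ j ∈ Finset.range k, (|c j| + 1) := Finset.sum_nonneg fun j _ => by positivity
    have := le_abs_self (c k); linarith
  have hL0 : ∀ k, 0 ≤ L k := fun k => Finset.sum_nonneg fun j _ => by positivity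
  have hLk : ∀ k : ℕ, (k:ℝ) ≤ L k := by
    intro k
    have : ∑ j ∈ Finset.range (k+1), (1:ℝ) ≤ L k := Finset.sum_le_sum fun j _ => by
      have := abs_nonneg (c j); linarith
    simp at this; linarith
  have hex : ∀ x, ∃ k, x ≤ L k := fun x => by
    obtain ⟨k, hk⟩ := exists_nat_ge x; exact ⟨k, hk.trans (hLk k)⟩
  have hfind : ∀ x k, Nat.find (hex x) ≤ k ↔ x ≤ L k := by
    intro x k
    constructor
    · intro h; exact (Nat.find_spec (hex x)).trans (hLm h)
    · intro h; exact Nat.find_min' _ h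
  let f : ℝ → ℝ := fun x => if 0 ≤ x then 1 / ((Nat.find (hex x) : ℝ) + 1) else 0
  have hf0 : ∀ x, 0 ≤ f x := fun x => by simp only [f]; split_ifs <;> positivity
  refine ⟨f, qc_mk hf0 (fun s hs => ?_), fun k => ⟨L k, hLc k, hL0 k, fun x => ?_⟩⟩
  · rcases le_or_gt s 1 with h1 | h1
    · have : {x | s ≤ f x} = Set.Icc 0 (L (⌊1 / s⌋₊ - 1)) := by
        have hfl : 1 ≤ ⌊1 / s⌋₊ := Nat.le_floor (by rw [le_div_iff₀ hs]; simpa using h1)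
        ext x
        simp only [Set.mem_ofPred_eq, Set.mem_Icc, f]
        by_cases hx : 0 ≤ x
        · rw [if_pos hx, ← hfind, Nat.le_sub_iff_add_le hfl, Nat.le_floor_iff (by positivity),
            le_div_comm₀ hs (by positivity)]
          push_cast; simp [hx]
        · simp [hx, hs]
      rw [this]; exact ⟨isCompact_Icc, convex_Icc _ _⟩
    · have : {x | s ≤ f x} = ∅ := by
        ext x; simp only [Set.mem_ofPred_eq, Set.mem_empty_iff_false, iff_false, not_le, f]
        split_ifs
        · refine lt_of_le_of_lt ?_ h1
          rw [div_le_one (by positivity)]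
          have : (0:ℝ) ≤ Nat.find (hex x) := Nat.cast_nonneg _
          linarith
        · exact hs
      rw [this]; exact ⟨isCompact_empty, convex_empty⟩
  · simp only [ind]
    split_ifs with h
    · simp only [f, if_pos h.1]
      have : (Nat.find (hex x) : ℝ) ≤ k := by exact_mod_cast (hfind x k).2 h.2
      gcongr
    · exact hf0 x

theorem forward {μ : (ℝ → ℝ) → ℝ} (hval : IsValuation1 μ) (hinv : IsInvariantVal1 μ)
    (hcont : IsContinuousVal1 μ) (hmon : IsMonotoneVal1 μ) :
    ∃ G F : ℝ → ℝ, ∃ δ > 0, Monotone G ∧ Continuous G ∧ (∀ s ≤ 0, G s = 0) ∧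
      Monotone F ∧ Continuous F ∧ (∀ s ≤ δ, F s = 0) ∧
      ∀ f, QuasiConcave1 f → μ f = V G F f := by
  let G : ℝ → ℝ := fun t => μ (ind (max t 0) 0 0)
  let F : ℝ → ℝ := fun t => μ (ind (max t 0) 0 1) - μ (ind (max t 0) 0 0)
  have hform : ∀ t l, 0 ≤ l → μ (ind (max t 0) 0 l) = G t + F t * l := fun t l hl =>
    ind_formula hval hinv hmon (le_max_right _ _) hl
  have hzero : ∀ l, ind 0 0 l = fun _ => 0 := fun l => by ext x; simp [ind]
  have hG : Monotone G := H_mono hmon 0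
  have hGc : Continuous G := H_cont hmon hcont 0
  have hFc : Continuous F := (H_cont hmon hcont 1).sub (H_cont hmon hcont 0)
  have hG0 : ∀ s ≤ 0, G s = 0 := fun s hs => by simp [G, hs, hzero, hval.1]
  have hF0 : ∀ s ≤ 0, F s = 0 := fun s hs => by simp [F, hs, hzero, hval.1]
  have hF : Monotone F := by
    intro s t hst
    by_contra hlt
    push Not at hlt
    have hp : 0 < F s - F t := by linarith
    obtain ⟨n, hn⟩ := exists_nat_gt ((G t - G s) / (F s - F t))
    rw [div_lt_iff₀ hp] at hn
    have := H_mono hmon n hst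
    simp only at this
    rw [hform s n (by positivity), hform t n (by positivity)] at this
    nlinarith
  have hFn : ∀ s, 0 ≤ F s := fun s => by
    rcases le_total s 0 with h | h
    · rw [hF0 s h]
    · rw [← hF0 0 le_rfl]; exact hF h
  have hGn : ∀ s, 0 ≤ G s := fun s => by
    rcases le_total s 0 with h | h
    · rw [hG0 s h]
    · rw [← hG0 0 le_rfl]; exact hG h
  have hδ : ∃ δ > 0, F δ = 0 := by
    by_contra hcon
    push Not at hcon
    have hpos : ∀ s > 0, 0 < F s := fun s hs => lt_of_le_of_ne (hFn s) (hcon s hs).symm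
    obtain ⟨f, hf, hk⟩ := exists_slow (fun k => (k:ℝ) / F (1 / ((k:ℝ) + 1)))
    obtain ⟨k, hk'⟩ := exists_nat_gt (μ f)
    obtain ⟨l, hl, hl0, hle⟩ := hk k
    have hp : 0 < 1 / ((k:ℝ) + 1) := by positivity
    have h1 := hmon _ _ (qc_ind hp.le 0 l) hf hle
    have h2 := hform (1 / ((k:ℝ) + 1)) l hl0
    rw [max_eq_left hp.le] at h2
    rw [div_le_iff₀ (hpos _ hp)] at hl
    have := hGn (1 / ((k:ℝ) + 1))
    linarith
  obtain ⟨δ, hδ, hFδ⟩ := hδ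
  have hF0' : ∀ s ≤ δ, F s = 0 := fun s hs => le_antisymm (hFδ ▸ hF hs) (hFn s)
  refine ⟨G, F, δ, hδ, hG, hGc, hG0, hF, hFc, hF0', fun f hf => ?_⟩
  obtain ⟨vval, vinv, vcont, -⟩ := V_props hG hGc (hG0 0 le_rfl) hF hFc hδ hF0'
  have key := D_zero (D := fun f => μ f - V G F f) ⟨by simp [hval.1, vval.1], ?_⟩ ?_ ?_ hf
  · linarith
  · intro f g hf hg hm
    have a := hval.2 f g hf hg hm
    have b := vval.2 f g hf hg hm
    linarith
  · intro fi f hfi hf hm hl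
    exact (hcont fi f hfi hf hm hl).sub (vcont fi f hfi hf hm hl)
  · intro t a b ht hab
    have h2 := hform t (b - a) (by linarith)
    rw [max_eq_left ht] at h2
    rw [V_ind (hF0 0 le_rfl) hFn ht hab, ind_shift hinv ht, h2, sub_self]

/-- The Stieltjes measure of a continuous increasing function vanishing on `(-∞,0]`. -/
lemma measure_exists {G : ℝ → ℝ} (hG : Monotone G) (hGc : Continuous G) (hG0 : ∀ s ≤ 0, G s = 0) :
    ∃ ν : Measure ℝ, SFinite ν ∧ ν (Set.Iio 0) = 0 ∧ (∀ K : Set ℝ, IsCompact K → ν K ≠ ⊤) ∧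
      (∀ t : ℝ, ν {t} = 0) ∧ (∀ s, ν (Set.Icc 0 s) = ENNReal.ofReal (G s)) ∧
      (∀ s, ν (Set.Ioc 0 s) = ENNReal.ofReal (G s)) := by
  let S : StieltjesFunction ℝ := ⟨G, hG, fun x => hGc.continuousWithinAt⟩
  have hl : ∀ t, Function.leftLim S t = G t := fun t =>
    tendsto_nhds_unique (hG.tendsto_leftLim t) (hGc.continuousAt.tendsto.mono_left nhdsWithin_le_nhds)
  refine ⟨S.measure, inferInstance, ?_, fun K hK => hK.measure_lt_top.ne, ?_, ?_, ?_⟩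
  · have : Tendsto S atBot (𝓝 0) := by
      refine tendsto_const_nhds.congr' ?_
      filter_upwards [eventually_le_atBot 0] with s hs
      exact (hG0 s hs).symm
    rw [S.measure_Iio this, hl, hG0 0 le_rfl]; simp
  · intro t; rw [S.measure_singleton, hl]; simp [S]
  · intro s; rw [S.measure_Icc, hl, hG0 0 le_rfl, sub_zero]
  · intro s; rw [S.measure_Ioc]
    have : S 0 = 0 := hG0 0 le_rfl
    rw [this, sub_zero]

/-- The four properties only depend on the values on quasi-concave functions. -/
lemma props_congr {μ V : (ℝ → ℝ) → ℝ} (h : ∀ f, QuasiConcave1 f → μ f = V f)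
    (hV : IsValuation1 V ∧ IsInvariantVal1 V ∧ IsContinuousVal1 V ∧ IsMonotoneVal1 V) :
    IsValuation1 μ ∧ IsInvariantVal1 μ ∧ IsContinuousVal1 μ ∧ IsMonotoneVal1 μ := by
  obtain ⟨h1, h2, h3, h4⟩ := hV
  have hz : QuasiConcave1 (fun _ => 0) := by
    have := qc_ind le_rfl 0 0
    have e : ind 0 0 0 = fun _ => 0 := by ext x; simp [ind]
    rwa [e] at this
  have hT : ∀ (T : ℝ ≃ᵢ ℝ) (f : ℝ → ℝ), QuasiConcave1 f → QuasiConcave1 (fun x => f (T x)) := by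
    intro T f hf
    refine qc_mk (fun x => hf.1 _) (fun s hs => ?_)
    have e : {x | s ≤ f (T x)} = T.symm '' {x | s ≤ f x} := by
      ext x
      simp only [Set.mem_ofPred_eq, Set.mem_image]
      constructor
      · intro hx; exact ⟨T x, hx, by simp⟩
      · rintro ⟨y, hy, rfl⟩; simpa using hy
    rw [e]
    refine ⟨(qc_isCompact hf hs).image T.symm.continuous, ?_⟩
    rw [Real.convex_iff_isPreconnected]
    exact (qc_convex hf hs).isPreconnected.image _ T.symm.continuous.continuousOn
  refine ⟨⟨by rw [h _ hz, h1.1], ?_⟩, ?_, ?_, ?_⟩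
  · intro f g hf hg hm
    rw [h _ hm, h _ (qc_min hf hg), h _ hf, h _ hg, h1.2 f g hf hg hm]
  · intro T f hf
    rw [h _ (hT T f hf), h _ hf, h2 T f hf]
  · intro fi f hfi hf hm hl
    have e : (fun i => μ (fi i)) = fun i => V (fi i) := by ext i; exact h _ (hfi i)
    rw [e, h _ hf]; exact h3 fi f hfi hf hm hl
  · intro f g hf hg hfg
    rw [h _ hf, h _ hg]; exact h4 f g hf hg hfg

end QCval

/-- Characterization of invariant, continuous, monotone increasing valuations on `C^1`:
`μ` is such a valuation if and only if there exist non-atomic Radon measures `ν₀, ν₁`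
on `[0,∞)`, with `ν₁([0,δ]) = 0` for some `δ > 0`, such that
`μ(f) = ν₀([0, M(f)]) + ∫_{(0,∞)} vol_1(L_t(f)) dν₁(t)` for every `f ∈ C^1`,
where `M(f) = sup f` (attained as a maximum). -/
theorem characterization_monotone_valuations_dim_one (μ : (ℝ → ℝ) → ℝ) :
    (IsValuation1 μ ∧ IsInvariantVal1 μ ∧ IsContinuousVal1 μ ∧ IsMonotoneVal1 μ) ↔
    ∃ ν₀ ν₁ : Measure ℝ, ∃ δ > (0:ℝ),
      ν₀ (Set.Iio 0) = 0 ∧ ν₁ (Set.Iio 0) = 0 ∧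
      (∀ K : Set ℝ, IsCompact K → ν₀ K ≠ ⊤) ∧
      (∀ K : Set ℝ, IsCompact K → ν₁ K ≠ ⊤) ∧
      (∀ t : ℝ, ν₀ {t} = 0) ∧ (∀ t : ℝ, ν₁ {t} = 0) ∧
      ν₁ (Set.Icc 0 δ) = 0 ∧
      ∀ f : ℝ → ℝ, QuasiConcave1 f →
        μ f = (ν₀ (Set.Icc 0 (sSup (Set.range f)))).toReal +
          (∫⁻ t in Set.Ioi (0:ℝ), volume {x | t ≤ f x} ∂ν₁).toReal := by
  constructor
  · rintro ⟨hval, hinv, hcont, hmon⟩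
    obtain ⟨G, F, δ, hδ, hG, hGc, hG0, hF, hFc, hF0, hV⟩ := QCval.forward hval hinv hcont hmon
    have hF0' : ∀ s ≤ 0, F s = 0 := fun s hs => hF0 s (hs.trans hδ.le)
    have hGn : ∀ s, 0 ≤ G s := fun s => by
      rcases le_total s 0 with h | h
      · rw [hG0 s h]
      · rw [← hG0 0 le_rfl]; exact hG h
    obtain ⟨ν₀, -, a1, a2, a3, -, a5⟩ := QCval.measure_exists hG hGc hG0
    obtain ⟨ν₁, b0, b1, b2, b3, b4, b5⟩ := QCval.measure_exists hF hFc hF0'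
    refine ⟨ν₀, ν₁, δ, hδ, a1, b1, a2, b2, a3, b3, ?_, fun f hf => ?_⟩
    · rw [b4, hF0 δ le_rfl, ENNReal.ofReal_zero]
    · rw [hV f hf]
      exact (QCval.R_eq_V a3 hGn (fun s _ => a5 s) (fun s _ => b5 s) hf).symm
  · rintro ⟨ν₀, ν₁, δ, hδ, -, -, a2, b2, a3, b3, hν, hμ⟩
    obtain ⟨G, hG, hGc, hG0, hGn, hGe⟩ := QCval.cdf_exists a2 a3
    obtain ⟨F, hF, hFc, hF0, hFn, hFe⟩ := QCval.cdf_exists b2 b3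
    have : IsLocallyFiniteMeasure ν₁ := ⟨fun x => ⟨Set.Icc (x-1) (x+1),
      Icc_mem_nhds (by linarith) (by linarith), (b2 _ isCompact_Icc).lt_top⟩⟩
    have hFδ : ∀ s ≤ δ, F s = 0 := by
      intro s hs
      have h1 : ν₁ (Set.Ioc 0 s) = 0 := measure_mono_null
        (Set.Ioc_subset_Icc_self.trans (Set.Icc_subset_Icc_right hs)) hν
      rw [hFe, ENNReal.ofReal_eq_zero] at h1
      exact le_antisymm h1 (hFn s)
    refine QCval.props_congr (V := QCval.V G F) (fun f hf => ?_)
      (QCval.V_props hG hGc (hG0 0 le_rfl) hF hFc hδ hFδ)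
    rw [hμ f hf]
    exact QCval.R_eq_V a3 hGn (fun s _ => hGe s) (fun s _ => hFe s) hf

end
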